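/- Under the hypotheses listed in the context, suppose in addition there exist λ̲ > 0 and τ > 0 with λ̲ ≤ λ_k ≤ 1/α_k − τ for all k, and there exists γ̲ > 0 with γ_k ≥ γ̲ for all k. Then there exists p ∈ Ω such that the iterates x_k converge weakly to p, i.e., ⟨x_k, y⟩ → ⟨p, y⟩ for every y ∈ H. -/

import Mathlib

open RealInnerProductSpace Filter

/-!
Each iterate is compared with a zero `p` of `A + B` in the norm `√⟪V k v, v⟫` of the current metric
`V k = (U k)⁻¹`. Monotonicity of `A` and cocoercivity of `B` show that an exact relaxed step
decreases the squared distance to `p` by a multiple of the squared residual. The metrics grow by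
summable factors and the errors are summable, so the distances converge and the residuals tend to
zero. The residuals produce graph points `(z k, u k)` of `A` with `u k + B (z k) → 0`. By
monotonicity and cocoercivity `B (z k)` is then Cauchy, hence `u k` converges strongly, and a weak
cluster point of the iterates is a zero of `A + B` because the graph of `A` is weak–strong closed on
bounded sets. Finally `V k` converges pointwise, so an Opial argument in the variable metric leaves
only one weak cluster point.
-/

open scoped Topology

section RealSequences

variable {η ε r : ℕ → ℝ}

lemma one_le_prod_range_one_add (hη : ∀ k, 0 ≤ η k) (n : ℕ) :
    1 ≤ ∏ k ∈ Finset.range n, (1 + η k) :=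
  Finset.one_le_prod fun k _ ↦ le_add_of_nonneg_right (hη k)

/- Dividing by `∏ j < k, (1 + η j)` removes the factors `1 + η k`, and subtracting the partial sums
of `ε` then leaves an antitone sequence. -/
theorem exists_tendsto_of_succ_le_one_add_mul_add (hη : ∀ k, 0 ≤ η k) (hη_sum : Summable η)
    (hε : ∀ k, 0 ≤ ε k) (hε_sum : Summable ε) (hr : ∀ k, 0 ≤ r k)
    (hr_succ : ∀ k, r (k + 1) ≤ (1 + η k) * (r k + ε k)) :
    ∃ l, Tendsto r atTop (𝓝 l) := by
  set P : ℕ → ℝ := fun n ↦ ∏ k ∈ Finset.range n, (1 + η k)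
  have hP_one : ∀ k, 1 ≤ P k := one_le_prod_range_one_add hη
  have hP_pos : ∀ k, 0 < P k := fun k ↦ one_pos.trans_le (hP_one k)
  have hP_lim : Tendsto P atTop (𝓝 (∏' k, (1 + η k))) :=
    (Real.multipliable_one_add_of_summable hη_sum).hasProd.tendsto_prod_nat
  set s : ℕ → ℝ := fun k ↦ r k / P k - ∑ j ∈ Finset.range k, ε j with hs
  have hs_anti : Antitone s := antitone_nat_of_succ_le fun k ↦ by
    have hratio : r (k + 1) / P (k + 1) ≤ r k / P k + ε k :=
      calc r (k + 1) / P (k + 1)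
          ≤ (1 + η k) * (r k + ε k) / (P k * (1 + η k)) := by
            rw [show P (k + 1) = P k * (1 + η k) from Finset.prod_range_succ _ _]
            exact div_le_div_of_nonneg_right (hr_succ k)
              (mul_nonneg (hP_pos k).le (by linarith [hη k]))
        _ = r k / P k + ε k / P k := by
            have := (hP_pos k).ne'
            have : 1 + η k ≠ 0 := by linarith [hη k]
            field_simp
        _ ≤ r k / P k + ε k := by gcongr; exact div_le_self (hε k) (hP_one k)
    simp only [hs, Finset.sum_range_succ]
    linarith
  have hs_bdd : BddBelow (Set.range s) := by
    refine ⟨-∑' j, ε j, Set.forall_mem_range.2 fun k ↦ ?_⟩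
    have := hε_sum.sum_le_tsum (Finset.range k) fun j _ ↦ hε j
    have := div_nonneg (hr k) (hP_pos k).le
    simp only [hs]
    linarith
  refine ⟨_, (((tendsto_atTop_ciInf hs_anti hs_bdd).add hε_sum.hasSum.tendsto_sum_nat).mul
    hP_lim).congr fun k ↦ ?_⟩
  simp only [hs, sub_add_cancel, div_mul_cancel₀ _ (hP_pos k).ne']

theorem tendsto_of_le_of_succ_le_one_add_mul_add {q : ℕ → ℝ} {l : ℝ} (hη : ∀ k, 0 ≤ η k)
    (hη_lim : Tendsto η atTop (𝓝 0)) (hε_lim : Tendsto ε atTop (𝓝 0))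
    (hr_lim : Tendsto r atTop (𝓝 l)) (hqr : ∀ k, q k ≤ r k)
    (hr_succ : ∀ k, r (k + 1) ≤ (1 + η k) * (q k + ε k)) :
    Tendsto q atTop (𝓝 l) := by
  have hlow : Tendsto (fun k ↦ r (k + 1) / (1 + η k) - ε k) atTop (𝓝 l) := by
    simpa using (((tendsto_add_atTop_iff_nat 1).2 hr_lim).div (hη_lim.const_add 1)
      (by norm_num)).sub hε_lim
  refine tendsto_of_tendsto_of_tendsto_of_le_of_le hlow hr_lim (fun k ↦ ?_) hqr
  have hk : 0 < 1 + η k := by linarith [hη k]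
  exact sub_le_iff_le_add.2 ((div_le_iff₀' hk).2 (hr_succ k))

end RealSequences

section QuasiFejer

theorem exists_tendsto_and_tendsto_zero_of_quasiFejer {E : Type*} [AddCommGroup E] [Module ℝ E]
    {N : ℕ → Seminorm ℝ E} {η δ : ℕ → ℝ} {x y : ℕ → E} {p : E}
    (hη : ∀ k, 0 ≤ η k) (hη_sum : Summable η)
    (hN : ∀ k v, N (k + 1) v ≤ (1 + η k) * N k v) (hδ : ∀ k, 0 ≤ δ k)
    (hdescent : ∀ k, N k (y k - p) ^ 2 + δ k ≤ N k (x k - p) ^ 2)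
    (herr : Summable fun k ↦ N k (x (k + 1) - y k)) :
    (∃ l, Tendsto (fun k ↦ N k (x k - p)) atTop (𝓝 l)) ∧ Tendsto δ atTop (𝓝 0) := by
  have hyx : ∀ k, N k (y k - p) ≤ N k (x k - p) := fun k ↦
    le_of_sq_le_sq (by linarith [hdescent k, hδ k]) (apply_nonneg _ _)
  have hxy : ∀ k, N (k + 1) (x (k + 1) - p) ≤
      (1 + η k) * (N k (y k - p) + N k (x (k + 1) - y k)) := fun k ↦ by
    refine (hN k _).trans (mul_le_mul_of_nonneg_left ?_ (by linarith [hη k]))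
    simpa [add_comm] using map_add_le_add (N k) (x (k + 1) - y k) (y k - p)
  obtain ⟨l, hl⟩ := exists_tendsto_of_succ_le_one_add_mul_add hη hη_sum
    (fun k ↦ apply_nonneg _ _) herr (r := fun k ↦ N k (x k - p)) (fun k ↦ apply_nonneg _ _)
    fun k ↦ (hxy k).trans (by have := hη k; gcongr; exact hyx k)
  have hy : Tendsto (fun k ↦ N k (y k - p)) atTop (𝓝 l) :=
    tendsto_of_le_of_succ_le_one_add_mul_add hη hη_sum.tendsto_atTop_zero
      herr.tendsto_atTop_zero hl hyx hxy
  refine ⟨⟨l, hl⟩, squeeze_zero hδ (fun k ↦ le_sub_iff_add_le'.2 (hdescent k)) ?_⟩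
  simpa using (hl.pow 2).sub (hy.pow 2)

end QuasiFejer

section PositiveOperators

variable {H : Type*} [NormedAddCommGroup H] [InnerProductSpace ℝ H]

/-- The semi-inner product `(x, y) ↦ ⟪T x, y⟫` of a positive operator `T`, from which Mathlib
supplies the Cauchy–Schwarz and triangle inequalities of `energySeminorm`. -/
@[reducible]
def energyCore (T : H →L[ℝ] H) (hT : T.IsPositive) : PreInnerProductSpace.Core ℝ H where
  inner x y := ⟪T x, y⟫
  conj_inner_symm x y := (real_inner_comm _ _).trans (hT.inner_left_eq_inner_right x y).symm
  re_inner_nonneg := hT.inner_nonneg_left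
  add_left x y z := by rw [map_add, inner_add_left]
  smul_left x y c := by rw [map_smul, inner_smul_left]

/-- The seminorm `x ↦ √⟪T x, x⟫` of a positive operator `T`: the metric in which one step of the
iteration is measured. -/
noncomputable def energySeminorm (T : H →L[ℝ] H) (hT : T.IsPositive) : Seminorm ℝ H :=
  letI : Norm H := InnerProductSpace.Core.toNorm (c := energyCore T hT)
  have hcore := InnerProductSpace.Core.toSeminormedSpaceCore (energyCore T hT)
  Seminorm.of (fun x ↦ √⟪T x, x⟫) hcore.norm_triangle hcore.norm_smul

lemma energySeminorm_sq {T : H →L[ℝ] H} (hT : T.IsPositive) (x : H) :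
    energySeminorm T hT x ^ 2 = ⟪T x, x⟫ :=
  Real.sq_sqrt (hT.inner_nonneg_left x)

lemma inner_le_energySeminorm_mul {T : H →L[ℝ] H} (hT : T.IsPositive) (x y : H) :
    ⟪T x, y⟫ ≤ energySeminorm T hT x * energySeminorm T hT y :=
  (le_abs_self _).trans
    (InnerProductSpace.Core.norm_inner_le_norm (c := energyCore T hT) x y)

lemma energySeminorm_le_mul {T T' : H →L[ℝ] H} (hT : T.IsPositive) (hT' : T'.IsPositive) {c : ℝ}
    (hc : 1 ≤ c) (hle : ∀ x, ⟪T' x, x⟫ ≤ c * ⟪T x, x⟫) (x : H) :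
    energySeminorm T' hT' x ≤ c * energySeminorm T hT x := by
  refine le_of_sq_le_sq ?_ (mul_nonneg (by linarith) (apply_nonneg _ _))
  calc energySeminorm T' hT' x ^ 2 = ⟪T' x, x⟫ := energySeminorm_sq hT' x
    _ ≤ c * ⟪T x, x⟫ := hle x
    _ ≤ c ^ 2 * ⟪T x, x⟫ :=
        mul_le_mul_of_nonneg_right (le_self_pow₀ hc two_ne_zero) (hT.inner_nonneg_left x)
    _ = (c * energySeminorm T hT x) ^ 2 := by rw [mul_pow, energySeminorm_sq]

lemma energySeminorm_le_sqrt_mul_norm {T : H →L[ℝ] H} (hT : T.IsPositive) {C : ℝ}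
    (hC : ∀ x, ⟪T x, x⟫ ≤ C * ‖x‖ ^ 2) (x : H) : energySeminorm T hT x ≤ √C * ‖x‖ :=
  calc energySeminorm T hT x ≤ √(C * ‖x‖ ^ 2) := Real.sqrt_le_sqrt (hC x)
    _ = √C * ‖x‖ := by rw [Real.sqrt_mul' _ (sq_nonneg _), Real.sqrt_sq (norm_nonneg x)]

lemma norm_sq_le_mul_inner {T : H →L[ℝ] H} (hT : T.IsPositive) {C : ℝ}
    (hC : ∀ x, ⟪T x, x⟫ ≤ C * ‖x‖ ^ 2) (x : H) : ‖T x‖ ^ 2 ≤ C * ⟪T x, x⟫ := by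
  rcases eq_or_ne (T x) 0 with hTx | hTx
  · simp [hTx]
  have hpos : 0 < ‖T x‖ ^ 2 := by positivity
  refine le_of_mul_le_mul_left ?_ hpos
  calc ‖T x‖ ^ 2 * ‖T x‖ ^ 2
      = ⟪T x, T x⟫ ^ 2 := by rw [real_inner_self_eq_norm_sq]; ring
    _ ≤ (energySeminorm T hT x * energySeminorm T hT (T x)) ^ 2 := by
        gcongr
        exacts [real_inner_self_nonneg, inner_le_energySeminorm_mul hT x (T x)]
    _ = ⟪T x, x⟫ * ⟪T (T x), T x⟫ := by rw [mul_pow, energySeminorm_sq, energySeminorm_sq]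
    _ ≤ ⟪T x, x⟫ * (C * ‖T x‖ ^ 2) := by
        gcongr
        exacts [hT.inner_nonneg_left x, hC (T x)]
    _ = ‖T x‖ ^ 2 * (C * ⟪T x, x⟫) := by ring

lemma norm_apply_le_mul_norm {T : H →L[ℝ] H} (hT : T.IsPositive) {C : ℝ} (hC₀ : 0 ≤ C)
    (hC : ∀ x, ⟪T x, x⟫ ≤ C * ‖x‖ ^ 2) (x : H) : ‖T x‖ ≤ C * ‖x‖ := by
  refine le_of_sq_le_sq ?_ (by positivity)
  calc ‖T x‖ ^ 2 ≤ C * ⟪T x, x⟫ := norm_sq_le_mul_inner hT hC x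
    _ ≤ C * (C * ‖x‖ ^ 2) := mul_le_mul_of_nonneg_left (hC x) hC₀
    _ = (C * ‖x‖) ^ 2 := by ring

lemma inner_apply_self_le_opNorm (T : H →L[ℝ] H) (x : H) : ⟪T x, x⟫ ≤ ‖T‖ * ‖x‖ ^ 2 :=
  calc ⟪T x, x⟫ ≤ ‖T x‖ * ‖x‖ := real_inner_le_norm _ _
    _ ≤ ‖T‖ * ‖x‖ * ‖x‖ := by gcongr; exact T.le_opNorm x
    _ = ‖T‖ * ‖x‖ ^ 2 := by ring

/- Expand `0 ≤ ⟪U w, w⟫` at `w = c • V x - V₁ x`. -/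
lemma inner_inverse_le_mul {U V U₁ V₁ : H →L[ℝ] H} {c : ℝ} (hU : U.IsPositive) (hc : 0 < c)
    (hUV : ∀ x, U (V x) = x) (hUV₁ : ∀ x, U₁ (V₁ x) = x)
    (hle : ∀ x, ⟪U x, x⟫ ≤ c * ⟪U₁ x, x⟫) (x : H) : ⟪V₁ x, x⟫ ≤ c * ⟪V x, x⟫ := by
  have hexpand : ⟪U (c • V x - V₁ x), c • V x - V₁ x⟫ =
      c ^ 2 * ⟪V x, x⟫ - 2 * c * ⟪V₁ x, x⟫ + ⟪U (V₁ x), V₁ x⟫ := by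
    have hcross : ⟪U (V₁ x), V x⟫ = ⟪V₁ x, x⟫ := by rw [hU.inner_left_eq_inner_right, hUV]
    simp only [map_sub, map_smul, hUV, inner_sub_left, inner_sub_right, real_inner_smul_left,
      real_inner_smul_right, hcross, real_inner_comm x]
    ring
  have hle' : ⟪U (V₁ x), V₁ x⟫ ≤ c * ⟪V₁ x, x⟫ := by
    simpa only [hUV₁, real_inner_comm x] using hle (V₁ x)
  refine le_of_mul_le_mul_left ?_ hc
  linarith [hU.inner_nonneg_left (c • V x - V₁ x)]

lemma inner_inverse_le_inv_mul_norm_sq {U V : H →L[ℝ] H} {α : ℝ} (hα : 0 < α)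
    (hU : ∀ x, α * ‖x‖ ^ 2 ≤ ⟪U x, x⟫) (hUV : ∀ x, U (V x) = x) (x : H) :
    ⟪V x, x⟫ ≤ α⁻¹ * ‖x‖ ^ 2 := by
  rw [← real_inner_self_eq_norm_sq]
  refine inner_inverse_le_mul (U := .id ℝ H) (V := .id ℝ H) ContinuousLinearMap.isPositive_id
    (inv_pos.2 hα) (fun _ ↦ rfl) hUV (fun y ↦ ?_) x
  rw [ContinuousLinearMap.id_apply, real_inner_self_eq_norm_sq, le_inv_mul_iff₀ hα]
  exact hU y

lemma isPositive_of_rightInverse {U V : H →L[ℝ] H} (hU : U.IsPositive)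
    (hUV : ∀ x, U (V x) = x) : V.IsPositive := by
  refine (ContinuousLinearMap.isPositive_iff V).2 ⟨fun x y ↦ ?_, fun x ↦ ?_⟩
  · have := hU.inner_left_eq_inner_right (V x) (V y)
    rw [hUV, hUV] at this
    exact this.symm
  · simpa only [hUV] using hU.inner_nonneg_right (V x)

lemma norm_sq_le_opNorm_mul_inner_inverse {U V : H →L[ℝ] H} (hU : U.IsPositive)
    (hUV : ∀ x, U (V x) = x) (x : H) : ‖x‖ ^ 2 ≤ ‖U‖ * ⟪V x, x⟫ := by
  simpa only [hUV, real_inner_comm x] using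
    norm_sq_le_mul_inner hU (inner_apply_self_le_opNorm U) (V x)

/- Positivity of `T k - T m` bounds `‖T k x - T m x‖ ^ 2` by the gap `⟪T k x, x⟫ - ⟪T m x, x⟫` of a
convergent real sequence. -/
theorem exists_tendsto_apply_of_antitone [CompleteSpace H] {T : ℕ → H →L[ℝ] H}
    (hT : ∀ k, (T k).IsPositive) (hanti : Antitone T) (x : H) :
    ∃ v, Tendsto (fun k ↦ T k x) atTop (𝓝 v) := by
  have hform_anti (y : H) : Antitone fun k ↦ ⟪T k y, y⟫ := fun k m hkm ↦ by
    simpa [inner_sub_left] using (hanti hkm).inner_nonneg_left y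
  have hform_bdd : BddBelow (Set.range fun k ↦ ⟪T k x, x⟫) :=
    ⟨0, Set.forall_mem_range.2 fun k ↦ (hT k).inner_nonneg_left x⟩
  set l := ⨅ k, ⟪T k x, x⟫
  have hlim : Tendsto (fun k ↦ ⟪T k x, x⟫) atTop (𝓝 l) :=
    tendsto_atTop_ciInf (hform_anti x) hform_bdd
  have hgap : ∀ k m, k ≤ m → ‖T k x - T m x‖ ^ 2 ≤ ‖T 0‖ * (⟪T k x, x⟫ - ⟪T m x, x⟫) := by
    intro k m hkm
    have hdiff : ∀ y, ⟪(T k - T m) y, y⟫ ≤ ‖T 0‖ * ‖y‖ ^ 2 := fun y ↦ by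
      rw [_root_.sub_apply, inner_sub_left]
      linarith [(hT m).inner_nonneg_left y, hform_anti y k.zero_le,
        inner_apply_self_le_opNorm (T 0) y]
    simpa only [_root_.sub_apply, inner_sub_left] using norm_sq_le_mul_inner (hanti hkm) hdiff x
  have hcauchy : CauchySeq fun k ↦ T k x := by
    refine cauchySeq_of_le_tendsto_0' (fun k ↦ √(‖T 0‖ * (⟪T k x, x⟫ - l))) (fun k m hkm ↦ ?_) ?_
    · rw [dist_eq_norm]
      refine Real.le_sqrt_of_sq_le ((hgap k m hkm).trans ?_)
      gcongr
      exact ciInf_le hform_bdd m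
    · simpa using ((hlim.sub_const l).const_mul ‖T 0‖).sqrt
  exact cauchySeq_tendsto_of_complete hcauchy

theorem exists_tendsto_apply_of_succ_le_one_add_mul [CompleteSpace H] {V : ℕ → H →L[ℝ] H}
    {η : ℕ → ℝ} (hV : ∀ k, (V k).IsPositive) (hη : ∀ k, 0 ≤ η k) (hη_sum : Summable η)
    (hsucc : ∀ k x, ⟪V (k + 1) x, x⟫ ≤ (1 + η k) * ⟪V k x, x⟫) (x : H) :
    ∃ v, Tendsto (fun k ↦ V k x) atTop (𝓝 v) := by
  set P : ℕ → ℝ := fun n ↦ ∏ k ∈ Finset.range n, (1 + η k)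
  have hP_pos : ∀ k, 0 < P k := fun k ↦ one_pos.trans_le (one_le_prod_range_one_add hη k)
  have hP_lim : Tendsto P atTop (𝓝 (∏' k, (1 + η k))) :=
    (Real.multipliable_one_add_of_summable hη_sum).hasProd.tendsto_prod_nat
  have hscaled_pos (k : ℕ) : ((P k)⁻¹ • V k).IsPositive :=
    (hV k).smul_of_nonneg (inv_nonneg.2 (hP_pos k).le)
  have hscaled_anti : Antitone fun k ↦ (P k)⁻¹ • V k := by
    refine antitone_nat_of_succ_le fun k ↦ (ContinuousLinearMap.isPositive_iff _).2
      ⟨(hscaled_pos k).isSymmetric.sub (hscaled_pos (k + 1)).isSymmetric, fun y ↦ ?_⟩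
    have hPk := hP_pos k
    have hηk : 0 < 1 + η k := by linarith [hη k]
    have hstep : (P (k + 1))⁻¹ * ⟪V (k + 1) y, y⟫ ≤ (P k)⁻¹ * ⟪V k y, y⟫ := by
      rw [show P (k + 1) = P k * (1 + η k) from Finset.prod_range_succ _ _, mul_inv, mul_assoc]
      gcongr
      exact (inv_mul_le_iff₀ hηk).2 (hsucc k y)
    simpa [inner_sub_left, real_inner_smul_left] using hstep
  obtain ⟨v, hv⟩ := exists_tendsto_apply_of_antitone hscaled_pos hscaled_anti x
  refine ⟨_, (hP_lim.smul hv).congr fun k ↦ ?_⟩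
  simp [smul_smul, (hP_pos k).ne']

end PositiveOperators

section WeakConvergence

variable {H : Type*} [NormedAddCommGroup H] [InnerProductSpace ℝ H] {ι : Type*} {l : Filter ι}
  {x z : ι → H} {p : H}

/-- Weak convergence of `x` to `p` along `l`, tested against vectors of `H`: in a Hilbert space
these represent all continuous linear functionals. -/
def TendstoWeakly (x : ι → H) (l : Filter ι) (p : H) : Prop :=
  ∀ y, Tendsto (fun i ↦ ⟪x i, y⟫) l (𝓝 ⟪p, y⟫)

namespace TendstoWeakly

lemma of_tendsto_sub_zero (hx : TendstoWeakly x l p) (hzx : Tendsto (fun i ↦ z i - x i) l (𝓝 0)) :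
    TendstoWeakly z l p := fun y ↦ by
  simpa [inner_sub_left] using (hzx.inner (tendsto_const_nhds (x := y))).add (hx y)

lemma inner {v : ι → H} {w : H} {M : ℝ} (hx : TendstoWeakly x l p) (hM : ∀ i, ‖x i‖ ≤ M)
    (hv : Tendsto v l (𝓝 w)) : Tendsto (fun i ↦ ⟪x i, v i⟫) l (𝓝 ⟪p, w⟫) := by
  have hbound : Tendsto (fun i ↦ M * ‖v i - w‖) l (𝓝 0) := by
    simpa using (hv.sub_const w).norm.const_mul M
  have hdiff : Tendsto (fun i ↦ ⟪x i, v i - w⟫) l (𝓝 0) :=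
    squeeze_zero_norm (fun i ↦ (norm_inner_le_norm _ _).trans (by gcongr; exact hM i)) hbound
  simpa [inner_sub_right] using hdiff.add (hx w)

lemma inner_sub {v : ι → H} {w : H} {M : ℝ} (hx : TendstoWeakly x l p) (hM : ∀ i, ‖x i‖ ≤ M)
    (hv : Tendsto v l (𝓝 w)) (q : H) :
    Tendsto (fun i ↦ ⟪x i - q, v i⟫) l (𝓝 ⟪p - q, w⟫) := by
  simpa only [inner_sub_left] using (hx.inner hM hv).sub (tendsto_const_nhds.inner hv)

end TendstoWeakly

theorem exists_tendstoWeakly_of_norm_le [CompleteSpace H] (F : Ultrafilter ι) {M : ℝ}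
    (hM : ∀ i, ‖x i‖ ≤ M) : ∃ p, TendstoWeakly x F p := by
  let f : ι → WeakDual ℝ H := fun i ↦ StrongDual.toWeakDual (innerSL ℝ (x i))
  have hf : ∀ i, f i ∈ WeakDual.toStrongDual ⁻¹' Metric.closedBall (0 : StrongDual ℝ H) M :=
    fun i ↦ mem_closedBall_zero_iff.2 ((innerSL_apply_norm (𝕜 := ℝ) (x i)).trans_le (hM i))
  obtain ⟨φ, -, hφ⟩ := (WeakDual.isCompact_closedBall 0 M).ultrafilter_le_nhds (F.map f)
    (le_principal_iff.2 (mem_map.2 (univ_mem' hf)))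
  refine ⟨(InnerProductSpace.toDual ℝ H).symm (WeakDual.toStrongDual φ), fun y ↦ ?_⟩
  rw [InnerProductSpace.toDual_symm_apply]
  exact (tendsto_iff_forall_eval_tendsto_topDualPairing.1 hφ) y

/- The cross term `⟪x i, V i (p - q)⟫` is half a difference of convergent quantities, so its limits
`⟪p, v⟫` along `F` and `⟪q, v⟫` along `G` agree, where `v = lim V i (p - q)`. -/
theorem eq_of_tendstoWeakly_of_tendsto_energy {V : ι → H →L[ℝ] H} {F G : Filter ι}
    [F.NeBot] [G.NeBot] {q : H} {μ M a b : ℝ} (hV : ∀ i, (V i).IsPositive)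
    (hV_lower : ∀ i y, ‖y‖ ^ 2 ≤ μ * ⟪V i y, y⟫)
    (hV_lim : ∀ y, ∃ v, Tendsto (fun i ↦ V i y) l (𝓝 v)) (hM : ∀ i, ‖x i‖ ≤ M)
    (hF : F ≤ l) (hG : G ≤ l) (hpF : TendstoWeakly x F p) (hqG : TendstoWeakly x G q)
    (hp : Tendsto (fun i ↦ ⟪V i (x i - p), x i - p⟫) l (𝓝 a))
    (hq : Tendsto (fun i ↦ ⟪V i (x i - q), x i - q⟫) l (𝓝 b)) : p = q := by
  obtain ⟨v, hv⟩ := hV_lim (p - q)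
  obtain ⟨vp, hvp⟩ := hV_lim p
  obtain ⟨vq, hvq⟩ := hV_lim q
  have hcross : Tendsto (fun i ↦ ⟪x i, V i (p - q)⟫) l
      (𝓝 ((b - a + ⟪vp, p⟫ - ⟪vq, q⟫) / 2)) := by
    refine ((((hq.sub hp).add (hvp.inner tendsto_const_nhds)).sub
      (hvq.inner tendsto_const_nhds)).div_const 2).congr fun i ↦ ?_
    simp only [map_sub, inner_sub_left, inner_sub_right, (hV i).inner_left_eq_inner_right (x i),
      real_inner_comm (x i)]
    ring
  have hpv := tendsto_nhds_unique (hcross.mono_left hF) (hpF.inner hM (hv.mono_left hF))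
  have hqv := tendsto_nhds_unique (hcross.mono_left hG) (hqG.inner hM (hv.mono_left hG))
  have horth : ⟪v, p - q⟫ = 0 := by
    rw [real_inner_comm, inner_sub_left, ← hpv, ← hqv, sub_self]
  have hnorm : ‖p - q‖ ^ 2 ≤ μ * ⟪v, p - q⟫ :=
    ge_of_tendsto' (((hv.mono_left hF).inner tendsto_const_nhds).const_mul μ)
      fun i ↦ hV_lower i (p - q)
  rw [horth, mul_zero] at hnorm
  exact sub_eq_zero.1 (norm_eq_zero.1 (sq_nonpos_iff _ |>.1 hnorm))

theorem exists_tendstoWeakly_of_variable_metric_opial [CompleteSpace H] [l.NeBot]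
    {V : ι → H →L[ℝ] H} {S : Set H} {μ M : ℝ} (hV : ∀ i, (V i).IsPositive)
    (hV_lower : ∀ i y, ‖y‖ ^ 2 ≤ μ * ⟪V i y, y⟫)
    (hV_lim : ∀ y, ∃ v, Tendsto (fun i ↦ V i y) l (𝓝 v)) (hM : ∀ i, ‖x i‖ ≤ M)
    (henergy : ∀ p ∈ S, ∃ a, Tendsto (fun i ↦ ⟪V i (x i - p), x i - p⟫) l (𝓝 a))
    (hcluster : ∀ (F : Ultrafilter ι) (p : H), ↑F ≤ l → TendstoWeakly x F p → p ∈ S) :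
    ∃ p ∈ S, TendstoWeakly x l p := by
  have hF : ↑(Ultrafilter.of l) ≤ l := Ultrafilter.of_le l
  obtain ⟨p, hp⟩ := exists_tendstoWeakly_of_norm_le (Ultrafilter.of l) hM
  have hpS := hcluster _ p hF hp
  obtain ⟨a, ha⟩ := henergy p hpS
  refine ⟨p, hpS, fun y ↦ (tendsto_iff_ultrafilter _ _ _).2 fun G hG ↦ ?_⟩
  obtain ⟨q, hq⟩ := exists_tendstoWeakly_of_norm_le G hM
  obtain ⟨b, hb⟩ := henergy q (hcluster G q hG hq)
  rw [eq_of_tendstoWeakly_of_tendsto_energy hV hV_lower hV_lim hM hF hG hp hq ha hb]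
  exact hq y

end WeakConvergence

section MonotoneOperators

variable {H : Type*} [NormedAddCommGroup H] [InnerProductSpace ℝ H] {A : H → Set H} {B : H → H}
  {β : ℝ} {ι : Type*} {l : Filter ι} {z u : ι → H} {p w : H} {M : ℝ}

/-- Monotonicity of a set-valued operator. -/
def IsMonotoneOperator (A : H → Set H) : Prop :=
  ∀ x y u v, u ∈ A x → v ∈ A y → 0 ≤ ⟪x - y, u - v⟫

/-- Maximal monotonicity of a set-valued operator: every pair that is monotonically related to the
whole graph already lies in it. -/
structure IsMaximalMonotone (A : H → Set H) : Prop where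
  isMonotoneOperator : IsMonotoneOperator A
  mem_of_forall_inner_nonneg : ∀ z w, (∀ x, ∀ u ∈ A x, 0 ≤ ⟪x - z, u - w⟫) → w ∈ A z

/-- `β`-cocoercivity of a single-valued operator. -/
def IsCocoercive (β : ℝ) (B : H → H) : Prop :=
  ∀ x y, β * ‖B x - B y‖ ^ 2 ≤ ⟪x - y, B x - B y⟫

theorem IsMaximalMonotone.mem_of_tendstoWeakly [l.NeBot] (hA : IsMaximalMonotone A)
    (hM : ∀ i, ‖z i‖ ≤ M) (hz : TendstoWeakly z l p) (hu : ∀ i, u i ∈ A (z i))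
    (huw : Tendsto u l (𝓝 w)) : w ∈ A p := by
  refine hA.mem_of_forall_inner_nonneg p w fun q v hv ↦ ?_
  have hlim : Tendsto (fun i ↦ ⟪z i - q, u i - v⟫) l (𝓝 ⟪p - q, w - v⟫) :=
    hz.inner_sub hM (huw.sub_const v) q
  rw [← inner_neg_neg, neg_sub, neg_sub]
  exact ge_of_tendsto' hlim fun i ↦ hA.isMonotoneOperator _ _ _ _ (hu i) hv

namespace IsCocoercive

lemma norm_apply_sub_le (hB : IsCocoercive β B) (hβ : 0 < β) (x y : H) :
    ‖B x - B y‖ ≤ ‖x - y‖ / β := by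
  rw [le_div_iff₀' hβ]
  rcases (norm_nonneg (B x - B y)).eq_or_lt with hzero | hpos
  · simp [← hzero]
  refine le_of_mul_le_mul_right ?_ hpos
  calc β * ‖B x - B y‖ * ‖B x - B y‖ = β * ‖B x - B y‖ ^ 2 := by ring
    _ ≤ ⟪x - y, B x - B y⟫ := hB x y
    _ ≤ ‖x - y‖ * ‖B x - B y‖ := real_inner_le_norm _ _

/- AM-GM: `‖z - x‖ * ‖B x - B p‖ ≤ β * ‖B x - B p‖ ^ 2 + ‖z - x‖ ^ 2 / (4 * β)`. -/
lemma neg_norm_sq_div_le_inner (hB : IsCocoercive β B) (hβ : 0 < β) (x z p : H) :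
    -(‖z - x‖ ^ 2 / (4 * β)) ≤ ⟪z - p, B x - B p⟫ := by
  have hcoco := hB x p
  have hcs := neg_le_of_abs_le (abs_real_inner_le_norm (z - x) (B x - B p))
  have hsquare : β * ‖B x - B p‖ ^ 2 + ‖z - x‖ ^ 2 / (4 * β) - ‖z - x‖ * ‖B x - B p‖ =
      (2 * β * ‖B x - B p‖ - ‖z - x‖) ^ 2 / (4 * β) := by
    field_simp
    ring
  have hnonneg : 0 ≤ (2 * β * ‖B x - B p‖ - ‖z - x‖) ^ 2 / (4 * β) := by positivity
  rw [← sub_add_sub_cancel z x p, inner_add_left]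
  linarith

lemma eq_of_tendstoWeakly [l.NeBot] (hB : IsCocoercive β B) (hβ : 0 < β) (hM : ∀ i, ‖z i‖ ≤ M)
    (hz : TendstoWeakly z l p) (hBz : Tendsto (fun i ↦ B (z i)) l (𝓝 w)) : w = B p := by
  have hlim := hz.inner_sub hM (hBz.sub_const (B p)) p
  have hnorm : β * ‖w - B p‖ ^ 2 ≤ ⟪p - p, w - B p⟫ :=
    le_of_tendsto_of_tendsto' (((hBz.sub_const (B p)).norm.pow 2).const_mul β) hlim
      fun i ↦ hB (z i) p
  rw [sub_self, inner_zero_left] at hnorm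
  have hsq : ‖w - B p‖ ^ 2 ≤ 0 := nonpos_of_mul_nonpos_right hnorm hβ
  exact sub_eq_zero.1 (norm_eq_zero.1 (sq_nonpos_iff _ |>.1 hsq))

lemma mul_norm_sq_sub_le_of_mem (hB : IsCocoercive β B) (hA : IsMonotoneOperator A)
    {x y u v : H} (hu : u ∈ A x) (hv : v ∈ A y) :
    β * ‖B x - B y‖ ^ 2 ≤ ⟪x - y, (u + B x) - (v + B y)⟫ := by
  rw [add_sub_add_comm, inner_add_right]
  linarith [hB x y, hA x y u v hu hv]

lemma exists_tendsto_apply_of_tendsto_add [CompleteSpace H] [l.NeBot] (hB : IsCocoercive β B)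
    (hβ : 0 < β) (hA : IsMonotoneOperator A) (hM : ∀ i, ‖z i‖ ≤ M) (hu : ∀ i, u i ∈ A (z i))
    (huw : Tendsto (fun i ↦ u i + B (z i)) l (𝓝 w)) :
    ∃ y, Tendsto (fun i ↦ B (z i)) l (𝓝 y) := by
  rw [← cauchy_map_iff_exists_tendsto, cauchy_map_iff', Metric.uniformity_eq_comap_nhds_zero,
    tendsto_comap_iff]
  have hdist : Tendsto (fun i : ι × ι ↦ dist (u i.1 + B (z i.1)) (u i.2 + B (z i.2)))
      (l ×ˢ l) (𝓝 0) := by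
    simpa using (huw.comp tendsto_fst).dist (huw.comp tendsto_snd)
  have hbound := ((hdist.const_mul (2 * M / β)).sqrt)
  rw [mul_zero, Real.sqrt_zero] at hbound
  refine squeeze_zero (fun _ ↦ dist_nonneg) (fun ⟨i, j⟩ ↦ Real.le_sqrt_of_sq_le ?_) hbound
  simp only [dist_eq_norm]
  rw [div_mul_eq_mul_div, le_div_iff₀' hβ]
  calc β * ‖B (z i) - B (z j)‖ ^ 2
      ≤ ⟪z i - z j, (u i + B (z i)) - (u j + B (z j))⟫ :=
        hB.mul_norm_sq_sub_le_of_mem hA (hu i) (hu j)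
    _ ≤ ‖z i - z j‖ * ‖(u i + B (z i)) - (u j + B (z j))‖ := real_inner_le_norm _ _
    _ ≤ 2 * M * ‖(u i + B (z i)) - (u j + B (z j))‖ := by
        gcongr
        linarith [norm_sub_le (z i) (z j), hM i, hM j]

end IsCocoercive

theorem IsMaximalMonotone.sub_mem_of_tendsto_add [CompleteSpace H] [l.NeBot]
    (hA : IsMaximalMonotone A) (hB : IsCocoercive β B) (hβ : 0 < β) (hM : ∀ i, ‖z i‖ ≤ M)
    (hz : TendstoWeakly z l p) (hu : ∀ i, u i ∈ A (z i))
    (huw : Tendsto (fun i ↦ u i + B (z i)) l (𝓝 w)) : w - B p ∈ A p := by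
  obtain ⟨y, hy⟩ :=
    hB.exists_tendsto_apply_of_tendsto_add hβ hA.isMonotoneOperator hM hu huw
  rw [← hB.eq_of_tendstoWeakly hβ hM hz hy]
  refine hA.mem_of_tendstoWeakly hM hz hu ?_
  simpa using huw.sub hy

end MonotoneOperators

section ForwardBackward

variable {H : Type*} [NormedAddCommGroup H] [InnerProductSpace ℝ H] {A : H → Set H} {B J : H → H}
  {U V : H →L[ℝ] H} {β γ : ℝ}

/-- `J` is a resolvent of `γ • V⁻¹ A`, for `γ ≠ 0`: the inclusion `y ∈ J y + γ • V⁻¹ A (J y)`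
is written without inverting `V`. -/
def IsResolvent (A : H → Set H) (γ : ℝ) (V : H →L[ℝ] H) (J : H → H) : Prop :=
  ∀ y, (1 / γ) • V (y - J y) ∈ A (J y)

/-- The exact forward–backward step: a forward step along `B` in the metric `U`, followed by the
backward step `J`. -/
def forwardBackward (J : H → H) (γ : ℝ) (U : H →L[ℝ] H) (B : H → H) (x : H) : H :=
  J (x - γ • U (B x))

namespace IsResolvent

lemma energySeminorm_sub_le (hJ : IsResolvent A γ V J) (hA : IsMonotoneOperator A) (hγ : 0 < γ)
    (hV : V.IsPositive) (x y : H) :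
    energySeminorm V hV (J x - J y) ≤ energySeminorm V hV (x - y) := by
  have hmono : 0 ≤ γ⁻¹ * (⟪V (x - y), J x - J y⟫ - ⟪V (J x - J y), J x - J y⟫) := by
    have h := hA _ _ _ _ (hJ x) (hJ y)
    rwa [← smul_sub, ← map_sub, sub_sub_sub_comm, map_sub, real_inner_smul_right, one_div,
      real_inner_comm, inner_sub_left] at h
  have hfirm : energySeminorm V hV (J x - J y) ^ 2 ≤
      energySeminorm V hV (x - y) * energySeminorm V hV (J x - J y) := by
    rw [energySeminorm_sq]
    linarith [nonneg_of_mul_nonneg_right hmono (inv_pos.2 hγ),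
      inner_le_energySeminorm_mul hV (x - y) (J x - J y)]
  rcases (apply_nonneg (energySeminorm V hV) (J x - J y)).eq_or_lt with hzero | hpos
  · exact hzero ▸ apply_nonneg _ _
  · exact le_of_mul_le_mul_right (by rwa [← sq]) hpos

lemma forwardBackward_mem (hJ : IsResolvent A γ V J) (hγ : 0 < γ) (hVU : ∀ x, V (U x) = x)
    (x : H) :
    (1 / γ) • V (x - forwardBackward J γ U B x) - B x ∈ A (forwardBackward J γ U B x) := by
  have h := hJ (x - γ • U (B x))
  rwa [sub_right_comm, map_sub, map_smul, hVU, smul_sub, smul_smul, one_div_mul_cancel hγ.ne',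
    one_smul] at h

lemma energySeminorm_inexact_step_sub_le (hJ : IsResolvent A γ V J) (hA : IsMonotoneOperator A)
    (hγ : 0 < γ) (hV : V.IsPositive) {C κ t : ℝ} (hC : ∀ y, ⟪V y, y⟫ ≤ C * ‖y‖ ^ 2)
    (hκ : γ * ‖U‖ ≤ κ) (ht : 0 ≤ t) (x a b : H) :
    energySeminorm V hV (x + t • (J (x - γ • U (B x + b)) + a - x) -
        (x + t • (forwardBackward J γ U B x - x))) ≤ √C * (κ * (t * ‖b‖) + t * ‖a‖) := by
  have hforward : ‖γ • U b‖ ≤ κ * ‖b‖ :=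
    calc ‖γ • U b‖ = γ * ‖U b‖ := by rw [norm_smul, Real.norm_of_nonneg hγ.le]
      _ ≤ γ * (‖U‖ * ‖b‖) := by gcongr; exact U.le_opNorm b
      _ ≤ κ * ‖b‖ := by rw [← mul_assoc]; gcongr
  have hbackward : energySeminorm V hV (J (x - γ • U (B x + b)) - forwardBackward J γ U B x) ≤
      √C * (κ * ‖b‖) :=
    calc _ ≤ energySeminorm V hV (x - γ • U (B x + b) - (x - γ • U (B x))) :=
          hJ.energySeminorm_sub_le hA hγ hV _ _
      _ = energySeminorm V hV (γ • U b) := by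
          rw [sub_sub_sub_cancel_left, map_add, smul_add, sub_add_cancel_left, map_neg_eq_map]
      _ ≤ √C * ‖γ • U b‖ := energySeminorm_le_sqrt_mul_norm hV hC _
      _ ≤ √C * (κ * ‖b‖) := by gcongr
  calc _ = energySeminorm V hV
            (t • ((J (x - γ • U (B x + b)) - forwardBackward J γ U B x) + a)) := by
        congr 1
        module
    _ ≤ t * (√C * (κ * ‖b‖) + √C * ‖a‖) := by
        rw [map_smul_eq_mul, Real.norm_of_nonneg ht]
        gcongr
        exact (map_add_le_add _ _ _).trans
          (add_le_add hbackward (energySeminorm_le_sqrt_mul_norm hV hC a))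
    _ = √C * (κ * (t * ‖b‖) + t * ‖a‖) := by ring

end IsResolvent

lemma IsCocoercive.inner_le_of_forwardBackward_mem (hB : IsCocoercive β B) (hβ : 0 < β)
    (hA : IsMonotoneOperator A) (hγ : 0 < γ) {ν : ℝ} (hν : ∀ y, ‖y‖ ^ 2 ≤ ν * ⟪V y, y⟫)
    {x z p : H} (hz : (1 / γ) • V (x - z) - B x ∈ A z) (hp : -B p ∈ A p) :
    ⟪V (z - x), z - p⟫ ≤ γ * ν / (4 * β) * ⟪V (z - x), z - x⟫ := by
  have hmono : 0 ≤ -(γ⁻¹ * ⟪V (z - x), z - p⟫) - ⟪z - p, B x - B p⟫ := by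
    have h := hA _ _ _ _ hz hp
    rwa [sub_sub, ← sub_eq_add_neg, inner_sub_right, real_inner_smul_right, one_div,
      ← neg_sub z x, map_neg, inner_neg_right, real_inner_comm, mul_neg] at h
  have hcoco := hB.neg_norm_sq_div_le_inner hβ x z p
  have hbound : γ⁻¹ * ⟪V (z - x), z - p⟫ ≤ ‖z - x‖ ^ 2 / (4 * β) := by linarith
  calc ⟪V (z - x), z - p⟫ ≤ γ * (‖z - x‖ ^ 2 / (4 * β)) := (inv_mul_le_iff₀ hγ).1 hbound
    _ ≤ γ * (ν * ⟪V (z - x), z - x⟫ / (4 * β)) := by gcongr; exact hν _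
    _ = γ * ν / (4 * β) * ⟪V (z - x), z - x⟫ := by ring

lemma energySeminorm_relaxed_step_sq_add_le (hV : V.IsPositive) {x z p : H} {κ t : ℝ}
    (ht : 0 ≤ t) (hstep : ⟪V (z - x), z - p⟫ ≤ κ * ⟪V (z - x), z - x⟫) :
    energySeminorm V hV (x + t • (z - x) - p) ^ 2 + t * (2 - 2 * κ - t) * ⟪V (z - x), z - x⟫ ≤
      energySeminorm V hV (x - p) ^ 2 := by
  have hexpand : ⟪V (x + t • (z - x) - p), x + t • (z - x) - p⟫ = ⟪V (x - p), x - p⟫ +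
      2 * t * (⟪V (z - x), z - p⟫ - ⟪V (z - x), z - x⟫) + t ^ 2 * ⟪V (z - x), z - x⟫ := by
    have hsymm : ⟪V (x - p), z - x⟫ = ⟪V (z - x), x - p⟫ := by
      rw [hV.inner_left_eq_inner_right, real_inner_comm]
    rw [← inner_sub_right, sub_sub_sub_cancel_left, add_sub_right_comm]
    simp only [map_add, map_smul, inner_add_left, inner_add_right, real_inner_smul_left,
      real_inner_smul_right, hsymm]
    ring
  rw [energySeminorm_sq, energySeminorm_sq, hexpand]
  linarith [mul_le_mul_of_nonneg_left hstep (mul_nonneg zero_le_two ht)]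

end ForwardBackward

section Convergence

variable {H : Type*} [NormedAddCommGroup H] [InnerProductSpace ℝ H]

lemma tendsto_zero_of_tendsto_inner {ι : Type*} {l : Filter ι} {V : ι → H →L[ℝ] H} {e : ι → H}
    {μ : ℝ} (hV_lower : ∀ i y, ‖y‖ ^ 2 ≤ μ * ⟪V i y, y⟫)
    (he : Tendsto (fun i ↦ ⟪V i (e i), e i⟫) l (𝓝 0)) : Tendsto e l (𝓝 0) := by
  have hbound := (he.const_mul μ).sqrt
  rw [mul_zero, Real.sqrt_zero] at hbound
  exact squeeze_zero_norm (fun i ↦ Real.le_sqrt_of_sq_le (hV_lower i (e i))) hbound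

lemma exists_norm_le_of_tendsto_inner {V : ℕ → H →L[ℝ] H} {x : ℕ → H} {p : H} {μ r : ℝ}
    (hV_lower : ∀ k y, ‖y‖ ^ 2 ≤ μ * ⟪V k y, y⟫)
    (hx : Tendsto (fun k ↦ ⟪V k (x k - p), x k - p⟫) atTop (𝓝 r)) : ∃ M, ∀ k, ‖x k‖ ≤ M := by
  obtain ⟨R, hR⟩ := (hx.const_mul μ).bddAbove_range
  refine ⟨‖p‖ + √R, fun k ↦ (norm_le_insert' (x k) p).trans ?_⟩
  gcongr
  exact Real.le_sqrt_of_sq_le ((hV_lower k _).trans (hR (Set.mem_range_self k)))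

theorem IsMaximalMonotone.neg_mem_of_tendstoWeakly_forwardBackward [CompleteSpace H] {ι : Type*}
    {l : Filter ι} [l.NeBot] {A : H → Set H} {B : H → H} {V : ι → H →L[ℝ] H} {γ : ι → ℝ}
    {x z : ι → H} {p : H} {β γlb C M : ℝ} (hA : IsMaximalMonotone A) (hB : IsCocoercive β B)
    (hβ : 0 < β) (hγlb : 0 < γlb) (hγ : ∀ i, γlb ≤ γ i) (hV : ∀ i y, ‖V i y‖ ≤ C * ‖y‖)
    (hM : ∀ i, ‖z i‖ ≤ M) (hzx : Tendsto (fun i ↦ z i - x i) l (𝓝 0))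
    (hmem : ∀ i, (1 / γ i) • V i (x i - z i) - B (x i) ∈ A (z i))
    (hx : TendstoWeakly x l p) : -B p ∈ A p := by
  have hresidual : ∀ i, ‖(1 / γ i) • V i (x i - z i) - B (x i) + B (z i)‖ ≤
      (1 / γlb * C + 1 / β) * ‖z i - x i‖ := fun i ↦ by
    have hγi : 0 < γ i := hγlb.trans_le (hγ i)
    rw [sub_add_eq_add_sub, add_sub_assoc]
    calc _ ≤ 1 / γ i * ‖V i (x i - z i)‖ + ‖B (z i) - B (x i)‖ := by
          refine (norm_add_le _ _).trans_eq ?_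
          rw [norm_smul, Real.norm_of_nonneg (by positivity)]
      _ ≤ 1 / γlb * (C * ‖x i - z i‖) + ‖z i - x i‖ / β := by
          gcongr
          exacts [hγ i, hV i _, hB.norm_apply_sub_le hβ _ _]
      _ = _ := by rw [norm_sub_rev (x i)]; ring
  have hlim : Tendsto (fun i ↦ (1 / γ i) • V i (x i - z i) - B (x i) + B (z i)) l (𝓝 0) :=
    squeeze_zero_norm hresidual (by simpa using hzx.norm.const_mul (1 / γlb * C + 1 / β))
  simpa using hA.sub_mem_of_tendsto_add hB hβ hM (hx.of_tendsto_sub_zero hzx) hmem hlim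

theorem exists_tendsto_energy_and_tendsto_residual_forwardBackward
    {A : H → Set H} {B : H → H} {β : ℝ} (hβ : 0 < β) (hB : IsCocoercive β B)
    (hA : IsMonotoneOperator A) {C : ℝ} {U V : ℕ → H →L[ℝ] H}
    (hV : ∀ k, (V k).IsPositive) (hVU : ∀ k x, V k (U k x) = x)
    (hV_upper : ∀ k y, ⟪V k y, y⟫ ≤ C * ‖y‖ ^ 2)
    (hV_lower : ∀ k y, ‖y‖ ^ 2 ≤ ‖U k‖ * ⟪V k y, y⟫)
    {η : ℕ → ℝ} (hη : ∀ k, 0 ≤ η k) (hη_sum : Summable η)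
    (hV_succ : ∀ k y, ⟪V (k + 1) y, y⟫ ≤ (1 + η k) * ⟪V k y, y⟫)
    {γ lam : ℕ → ℝ} (hγ : ∀ k, 0 < γ k) {lamlb τ : ℝ} (hlamlb : 0 < lamlb) (hτ : 0 < τ)
    (hlam : ∀ k, lamlb ≤ lam k ∧ lam k ≤ 2 - γ k * ‖U k‖ / (2 * β) - τ)
    {a b : ℕ → H} (ha : Summable fun k ↦ lam k * ‖a k‖) (hb : Summable fun k ↦ lam k * ‖b k‖)
    {J : ℕ → H → H} (hJ : ∀ k, IsResolvent A (γ k) (V k) (J k)) {x : ℕ → H}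
    (hx : ∀ k, x (k + 1) = x k + lam k • (J k (x k - γ k • U k (B (x k) + b k)) + a k - x k))
    {p : H} (hp : -B p ∈ A p) :
    (∃ r, Tendsto (fun k ↦ ⟪V k (x k - p), x k - p⟫) atTop (𝓝 r)) ∧
      Tendsto (fun k ↦ ⟪V k (forwardBackward (J k) (γ k) (U k) B (x k) - x k),
        forwardBackward (J k) (γ k) (U k) B (x k) - x k⟫) atTop (𝓝 0) := by
  set z : ℕ → H := fun k ↦ forwardBackward (J k) (γ k) (U k) B (x k)
  set q : ℕ → ℝ := fun k ↦ ⟪V k (z k - x k), z k - x k⟫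
  have hlam₀ (k : ℕ) : 0 < lam k := hlamlb.trans_le (hlam k).1
  have hq (k : ℕ) : 0 ≤ q k := (hV k).inner_nonneg_left _
  have hκ (k : ℕ) : γ k * ‖U k‖ ≤ 4 * β := by
    have : γ k * ‖U k‖ / (2 * β) ≤ 2 := by linarith [(hlam k).2, hlam₀ k]
    linarith [(div_le_iff₀ (by positivity)).1 this]
  have hdescent (k : ℕ) : energySeminorm (V k) (hV k) (x k + lam k • (z k - x k) - p) ^ 2 +
      lamlb * τ * q k ≤ energySeminorm (V k) (hV k) (x k - p) ^ 2 := by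
    refine le_trans ?_ (energySeminorm_relaxed_step_sq_add_le (hV k) (hlam₀ k).le
      (hB.inner_le_of_forwardBackward_mem hβ hA (hγ k) (hV_lower k)
        ((hJ k).forwardBackward_mem (hγ k) (hVU k) (x k)) hp))
    gcongr
    · exact hq k
    · exact (hlam₀ k).le
    · exact (hlam k).1
    · linear_combination (hlam k).2
  have herr : Summable fun k ↦
      energySeminorm (V k) (hV k) (x (k + 1) - (x k + lam k • (z k - x k))) := by
    refine .of_nonneg_of_le (fun k ↦ apply_nonneg _ _) (fun k ↦ ?_)
      (((hb.mul_left (4 * β)).add ha).mul_left √C)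
    rw [hx k]
    exact (hJ k).energySeminorm_inexact_step_sub_le hA (hγ k) (hV k) (hV_upper k) (hκ k)
      (hlam₀ k).le _ _ _
  obtain ⟨⟨r, hr⟩, hq_lim⟩ := exists_tendsto_and_tendsto_zero_of_quasiFejer hη hη_sum
    (fun k v ↦ energySeminorm_le_mul (hV k) (hV (k + 1)) (by linarith [hη k]) (hV_succ k) v)
    (fun k ↦ mul_nonneg (mul_pos hlamlb hτ).le (hq k)) hdescent herr
  refine ⟨⟨r ^ 2, by simpa only [energySeminorm_sq] using hr.pow 2⟩, ?_⟩
  simpa [(mul_pos hlamlb hτ).ne'] using hq_lim.div_const (lamlb * τ)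

end Convergence

theorem fb_weak_convergence_general
    {H : Type*} [NormedAddCommGroup H] [InnerProductSpace ℝ H] [CompleteSpace H]
    {β : ℝ} (hβ : 0 < β) {B : H → H} (hB : IsCocoercive β B)
    {A : H → Set H} (hA : IsMaximalMonotone A) (hΩ : {z : H | ∃ u ∈ A z, u + B z = 0}.Nonempty)
    {α μ : ℝ} (hα : 0 < α) {U V : ℕ → H →L[ℝ] H} (hU : ∀ k, IsSelfAdjoint (U k))
    (hUpos : ∀ k x, α * ‖x‖ ^ 2 ≤ ⟪U k x, x⟫)
    (hVU : ∀ k x, V k (U k x) = x) (hUV : ∀ k x, U k (V k x) = x) (hUnorm : ∀ k, ‖U k‖ ≤ μ)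
    {η : ℕ → ℝ} (hη : ∀ k, 0 ≤ η k) (hη_sum : Summable η)
    (hUmono : ∀ k x, ⟪U k x, x⟫ ≤ (1 + η k) * ⟪U (k + 1) x, x⟫)
    {γ lam : ℕ → ℝ} {γlb lamlb τ : ℝ} (hγlb : 0 < γlb) (hγ : ∀ k, γlb ≤ γ k)
    (hlamlb : 0 < lamlb) (hτ : 0 < τ)
    (hlam : ∀ k, lamlb ≤ lam k ∧ lam k ≤ 2 - γ k * ‖U k‖ / (2 * β) - τ)
    {a b : ℕ → H} (ha : Summable fun k ↦ lam k * ‖a k‖) (hb : Summable fun k ↦ lam k * ‖b k‖)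
    {J : ℕ → H → H} (hJ : ∀ k, IsResolvent A (γ k) (V k) (J k)) {x : ℕ → H}
    (hx : ∀ k, x (k + 1) = x k + lam k • (J k (x k - γ k • U k (B (x k) + b k)) + a k - x k)) :
    ∃ p ∈ {z : H | ∃ u ∈ A z, u + B z = 0}, TendstoWeakly x atTop p := by
  simp only [add_eq_zero_iff_eq_neg, exists_eq_right] at hΩ ⊢
  have hU₀ (k : ℕ) : (U k).IsPositive := (ContinuousLinearMap.isPositive_iff _).2
    ⟨(hU k).isSymmetric, fun y ↦ (by positivity : 0 ≤ α * ‖y‖ ^ 2).trans (hUpos k y)⟩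
  have hV₀ (k : ℕ) : (V k).IsPositive := isPositive_of_rightInverse (hU₀ k) (hUV k)
  have hV_upper (k : ℕ) := inner_inverse_le_inv_mul_norm_sq hα (hUpos k) (hUV k)
  have hV_lower (k : ℕ) := norm_sq_le_opNorm_mul_inner_inverse (hU₀ k) (hUV k)
  have hV_lower' (k : ℕ) (y : H) : ‖y‖ ^ 2 ≤ μ * ⟪V k y, y⟫ := (hV_lower k y).trans
    (mul_le_mul_of_nonneg_right (hUnorm k) ((hV₀ k).inner_nonneg_left y))
  have hV_succ (k : ℕ) := inner_inverse_le_mul (hU₀ k) (by linarith [hη k]) (hUV k)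
    (hUV (k + 1)) (hUmono k)
  have hγ₀ (k : ℕ) : 0 < γ k := hγlb.trans_le (hγ k)
  have hfejer (p : H) (hp : -B p ∈ A p) :=
    exists_tendsto_energy_and_tendsto_residual_forwardBackward hβ hB hA.isMonotoneOperator hV₀ hVU
      hV_upper hV_lower hη hη_sum hV_succ hγ₀ hlamlb hτ hlam ha hb hJ hx hp
  obtain ⟨p₀, hp₀⟩ := hΩ
  obtain ⟨⟨r, hr⟩, hresidual⟩ := hfejer p₀ hp₀
  have hzx := tendsto_zero_of_tendsto_inner hV_lower' hresidual
  obtain ⟨M, hM⟩ := exists_norm_le_of_tendsto_inner hV_lower' hr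
  obtain ⟨R, hR⟩ := hzx.norm.bddAbove_range
  refine exists_tendstoWeakly_of_variable_metric_opial hV₀ hV_lower'
    (exists_tendsto_apply_of_succ_le_one_add_mul hV₀ hη hη_sum hV_succ) hM
    (fun p hp ↦ (hfejer p hp).1) fun F p hF hp ↦ ?_
  exact hA.neg_mem_of_tendstoWeakly_forwardBackward hB hβ hγlb hγ
    (fun k ↦ norm_apply_le_mul_norm (hV₀ k) (inv_pos.2 hα).le (hV_upper k))
    (fun k ↦ (norm_le_insert' _ (x k)).trans (add_le_add (hM k) (hR ⟨k, rfl⟩)))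
    (hzx.mono_left hF) (fun k ↦ (hJ k).forwardBackward_mem (hγ₀ k) (hVU k) (x k)) hp

theorem fb_weak_convergence
    {H : Type*} [NormedAddCommGroup H] [InnerProductSpace ℝ H] [CompleteSpace H]
    (β : ℝ) (hβ : 0 < β) (B : H → H)
    (hB : ∀ x y : H, ⟪x - y, B x - B y⟫ ≥ β * ‖B x - B y‖ ^ 2)
    (A : H → Set H)
    (hAmono : ∀ x y u v : H, u ∈ A x → v ∈ A y → ⟪x - y, u - v⟫ ≥ 0)
    (hAmax : ∀ z w : H, (∀ x : H, ∀ u ∈ A x, ⟪x - z, u - w⟫ ≥ 0) → w ∈ A z)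
    (hΩ : {z : H | ∃ u ∈ A z, u + B z = 0}.Nonempty)
    (α : ℝ) (hα : 0 < α) (μ : ℝ) (hμ : 0 < μ)
    (U V : ℕ → H →L[ℝ] H)
    (hU : ∀ k, IsSelfAdjoint (U k))
    (hUpos : ∀ k, ∀ x : H, ⟪U k x, x⟫ ≥ α * ‖x‖ ^ 2)
    (hV : ∀ k, IsSelfAdjoint (V k))
    (hVU : ∀ k, (V k).comp (U k) = ContinuousLinearMap.id ℝ H)
    (hUV : ∀ k, (U k).comp (V k) = ContinuousLinearMap.id ℝ H)
    (hUnorm : ∀ k, ‖U k‖ ≤ μ)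
    (η : ℕ → ℝ) (hη0 : ∀ k, 0 ≤ η k) (hηsum : Summable η)
    (hUmono : ∀ k, ∀ z : H, (1 + η k) * ⟪U (k + 1) z, z⟫ ≥ ⟪U k z, z⟫)
    (γ lam αk : ℕ → ℝ)
    (hγ : ∀ k, 0 < γ k ∧ γ k < 2 * β / ‖U k‖)
    (hαk : ∀ k, αk k = 2 * β / (4 * β - γ k * ‖U k‖))
    (hlam : ∀ k, 0 < lam k ∧ lam k < 1 / αk k)
    (a b : ℕ → H)
    (ha : Summable (fun k => lam k * ‖a k‖))
    (hb : Summable (fun k => lam k * ‖b k‖))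
    (J : ℕ → H → H)
    (hJ : ∀ k, ∀ y : H, (1 / γ k) • (V k (y - J k y)) ∈ A (J k y))
    (x : ℕ → H)
    (hx : ∀ k, x (k + 1) =
      x k + lam k • (J k (x k - γ k • U k (B (x k) + b k)) + a k - x k))
    (lamlb τ : ℝ) (hlamlb : 0 < lamlb) (hτ : 0 < τ)
    (hlam' : ∀ k, lamlb ≤ lam k ∧ lam k ≤ 1 / αk k - τ)
    (γlb : ℝ) (hγlb : 0 < γlb) (hγ' : ∀ k, γlb ≤ γ k) :
    ∃ p ∈ {z : H | ∃ u ∈ A z, u + B z = 0},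
      ∀ y : H, Tendsto (fun k => ⟪x k, y⟫) atTop (nhds ⟪p, y⟫) := by
  have hαk' (k : ℕ) : 1 / αk k = 2 - γ k * ‖U k‖ / (2 * β) := by
    rw [hαk, one_div_div]
    field_simp
    ring
  exact fb_weak_convergence_general hβ hB ⟨hAmono, hAmax⟩ hΩ hα hU hUpos
    (fun k ↦ DFunLike.congr_fun (hVU k)) (fun k ↦ DFunLike.congr_fun (hUV k)) hUnorm hη0 hηsum
    hUmono hγlb hγ' hlamlb hτ (fun k ↦ hαk' k ▸ hlam' k) ha hb hJ hx
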